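/- arXiv:1102.2326 — 5 statements merged into one kernel-verified Lean document; each statement's English description precedes it below -/
import Mathlib

section
/- Let Γ : ℝ × ℝ → (0, ∞) be continuously differentiable and suppose it satisfies the permutation functional equation Γ(ε₁, M) · Γ(ε₂, M − ε₁) = Γ(ε₂, M) · Γ(ε₁, M − ε₂) for all real ε₁, ε₂, M. Then there exist continuously differentiable functions f : ℝ → ℝ and h : ℝ → ℝ such that Γ(ε, M) = exp(f(M − ε) − f(M) + h(ε)) for all real ε, M. -/
/-!
Put `g = log Γ`, so that `g (a, M) + g (b, M - a) = g (b, M) + g (a, M - b)`. Averaging over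
`b ∈ [0, 1]` shows that `g (a, M)` is the increment over `[M - a, M]` of `∫ b in 0..1, g (b, ·)`,
plus the sliding average `∫ t in M - 1..M, g (a, t)`. In the latter `M` only enters through the
limits of integration: its rate of change `g (a, M) - g (a, M - 1)` equals
`g (1, M) - g (1, M - a)` by the equation with `b = 1`, so the sliding average is the increment of
`∫ t in 0..·, g (1, t)` plus a function of `a`. No derivative of `g` is involved, and `f` and `h`,
being integrals of `g`, inherit its smoothness.
-/

open Set MeasureTheory intervalIntegral

variable {E : Type*} [NormedAddCommGroup E] [NormedSpace ℝ E]

theorem hasDerivAt_intervalIntegral_of_continuous_deriv {F F' : ℝ × ℝ → E}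
    (hF : ∀ x, Continuous fun t ↦ F (x, t)) (hF' : Continuous F')
    (hderiv : ∀ x t, HasDerivAt (fun y ↦ F (y, t)) (F' (x, t)) x) (a b x₀ : ℝ) :
    HasDerivAt (fun x ↦ ∫ t in a..b, F (x, t)) (∫ t in a..b, F' (x₀, t)) x₀ := by
  obtain ⟨C, hC⟩ := ((isCompact_closedBall x₀ 1).prod
    (isCompact_uIcc (a := a) (b := b))).exists_bound_of_continuousOn hF'.continuousOn
  exact (hasDerivAt_integral_of_dominated_loc_of_deriv_le (F := fun x t ↦ F (x, t))
    (F' := fun x t ↦ F' (x, t)) (bound := fun _ ↦ C)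
    (Metric.closedBall_mem_nhds x₀ one_pos)
    (.of_forall fun x ↦ (hF x).aestronglyMeasurable) ((hF x₀).intervalIntegrable a b)
    (by fun_prop : Continuous fun t ↦ F' (x₀, t)).aestronglyMeasurable
    (.of_forall fun t ht x hx ↦ hC (x, t) ⟨hx, uIoc_subset_uIcc ht⟩)
    intervalIntegrable_const (.of_forall fun t _ x _ ↦ hderiv x t)).2

theorem contDiff_parametric_intervalIntegral {n : ℕ∞} {F : ℝ × ℝ → E} (hF : ContDiff ℝ n F)
    (a b : ℝ) : ContDiff ℝ n fun x ↦ ∫ t in a..b, F (x, t) := by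
  refine contDiff_iff_forall_nat_le.2 fun m hm ↦ ?_
  replace hF : ContDiff ℝ m F := hF.of_le (mod_cast hm)
  clear hm
  induction m generalizing F with
  | zero =>
    have := hF.continuous
    exact contDiff_zero.2 (by fun_prop)
  | succ m ih =>
    have hF_partial : ContDiff ℝ m fun p ↦ fderiv ℝ F p (1, 0) :=
      (hF.fderiv_right le_rfl).clm_apply contDiff_const
    have hF_deriv (x t : ℝ) : HasDerivAt (fun y ↦ F (y, t)) (fderiv ℝ F (x, t) (1, 0)) x :=
      ((hF.differentiable (by simp)) (x, t)).hasFDerivAt.comp_hasDerivAt x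
        ((hasDerivAt_id x).prodMk (hasDerivAt_const x t))
    have hderiv := hasDerivAt_intervalIntegral_of_continuous_deriv
      (fun x ↦ hF.continuous.comp (.prodMk_right x)) hF_partial.continuous hF_deriv a b
    refine (contDiff_succ_iff_deriv (n := m)).2
      ⟨fun x ↦ (hderiv x).differentiableAt, by simp, ?_⟩
    rw [funext fun x ↦ (hderiv x).deriv]
    exact ih hF_partial

theorem contDiff_primitive [CompleteSpace E] {n : ℕ∞} {f : ℝ → E} (hf : ContDiff ℝ n f) (a : ℝ) :
    ContDiff ℝ (n + 1) fun x ↦ ∫ t in a..x, f t := by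
  refine contDiff_succ_iff_deriv.2
    ⟨differentiable_integral_of_continuous hf.continuous, by simp, ?_⟩
  rwa [funext (hf.continuous.deriv_integral f a)]

/-- The additive form of the permutation functional equation, satisfied by `g = log Γ`. The first
coordinate of `g` is the emitted energy, the second the mass before the emission. -/
def IsPermutable {G A : Type*} [Sub G] [Add A] (g : G × G → A) : Prop :=
  ∀ a b M, g (a, M) + g (b, M - a) = g (b, M) + g (a, M - b)

theorem isPermutable_log {G : Type*} [Sub G] {Γ : G × G → ℝ} (hΓ : ∀ p, Γ p ≠ 0)
    (hfe : ∀ a b M, Γ (a, M) * Γ (b, M - a) = Γ (b, M) * Γ (a, M - b)) :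
    IsPermutable fun p ↦ Real.log (Γ p) := fun a b M ↦ by
  simp only [← Real.log_mul (hΓ _) (hΓ _), hfe a b M]

/-- The function `f` in the representation `g (a, M) = f (M - a) - f M + h a`. It is determined by
`g` up to an affine function; this choice is the one produced by averaging over `[0, 1]`. -/
noncomputable def emissionPotential (g : ℝ × ℝ → E) (M : ℝ) : E :=
  -((∫ b in (0 : ℝ)..1, g (b, M)) + ∫ t in (0 : ℝ)..M, g (1, t))

/-- The function `h` that accompanies `emissionPotential g` in the representation
`g (a, M) = f (M - a) - f M + h a`. -/
noncomputable def emissionOffset (g : ℝ × ℝ → E) (a : ℝ) : E :=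
  (∫ t in (-1 : ℝ)..0, g (a, t)) + ∫ t in (0 : ℝ)..(-a), g (1, t)

section Smoothness

variable [CompleteSpace E] {n : ℕ∞} {g : ℝ × ℝ → E}

theorem contDiff_emissionPotential (hg : ContDiff ℝ n g) : ContDiff ℝ n (emissionPotential g) :=
  have h_average : ContDiff ℝ n fun M ↦ ∫ b in (0 : ℝ)..1, g (b, M) :=
    contDiff_parametric_intervalIntegral (hg.comp (contDiff_snd.prodMk contDiff_fst)) 0 1
  have h_primitive : ContDiff ℝ n fun M ↦ ∫ t in (0 : ℝ)..M, g (1, t) :=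
    (contDiff_primitive (hg.comp (contDiff_const.prodMk contDiff_id)) 0).of_le le_self_add
  (h_average.add h_primitive).neg

theorem contDiff_emissionOffset (hg : ContDiff ℝ n g) : ContDiff ℝ n (emissionOffset g) :=
  have h_primitive : ContDiff ℝ n fun x ↦ ∫ t in (0 : ℝ)..x, g (1, t) :=
    (contDiff_primitive (hg.comp (contDiff_const.prodMk contDiff_id)) 0).of_le le_self_add
  (contDiff_parametric_intervalIntegral hg (-1) 0).add (h_primitive.comp contDiff_neg)

end Smoothness

namespace IsPermutable

variable {g : ℝ × ℝ → E}

theorem eq_integral_sub_add_integral [CompleteSpace E] (hg : IsPermutable g) (hcont : Continuous g)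
    (a M : ℝ) :
    g (a, M) = (∫ b in (0 : ℝ)..1, g (b, M)) - (∫ b in (0 : ℝ)..1, g (b, M - a)) +
      ∫ t in (M - 1)..M, g (a, t) := by
  have h_int {u : ℝ → E} (hu : Continuous u) : IntervalIntegrable u volume 0 1 :=
    hu.intervalIntegrable 0 1
  calc g (a, M)
      = ∫ _ in (0 : ℝ)..1, g (a, M) := by simp
    _ = ∫ b in (0 : ℝ)..1, (g (b, M) - g (b, M - a) + g (a, M - b)) :=
        integral_congr fun b _ ↦ by
          simp only [sub_add_eq_add_sub, ← hg a b M, add_sub_cancel_right]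
    _ = (∫ b in (0 : ℝ)..1, g (b, M)) - (∫ b in (0 : ℝ)..1, g (b, M - a)) +
          ∫ b in (0 : ℝ)..1, g (a, M - b) := by
        rw [integral_add (h_int (by fun_prop)) (h_int (by fun_prop)),
          integral_sub (h_int (by fun_prop)) (h_int (by fun_prop))]
    _ = _ := by rw [integral_comp_sub_left (fun t ↦ g (a, t)), sub_zero]

theorem integral_sub_one_eq (hg : IsPermutable g) (hcont : Continuous g) (a M : ℝ) :
    ∫ t in (M - 1)..M, g (a, t) =
      (∫ t in (0 : ℝ)..M, g (1, t)) - (∫ t in (0 : ℝ)..(M - a), g (1, t)) + emissionOffset g a := by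
  have h_int (c x y : ℝ) : IntervalIntegrable (fun t ↦ g (c, t)) volume x y :=
    (by fun_prop : Continuous fun t ↦ g (c, t)).intervalIntegrable x y
  have h_int_sub (c d x y : ℝ) : IntervalIntegrable (fun t ↦ g (c, t - d)) volume x y :=
    (by fun_prop : Continuous fun t ↦ g (c, t - d)).intervalIntegrable x y
  have h_change : (∫ t in (M - 1)..M, g (a, t)) - ∫ t in (-1 : ℝ)..0, g (a, t) =
      (∫ t in (0 : ℝ)..M, g (1, t)) - ∫ t in (-a)..(M - a), g (1, t) := calc
    _ = (∫ t in (0 : ℝ)..M, g (a, t)) - ∫ t in (-1 : ℝ)..(M - 1), g (a, t) :=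
      integral_interval_sub_interval_comm' (h_int ..) (h_int ..) (h_int ..)
    _ = ∫ t in (0 : ℝ)..M, (g (a, t) - g (a, t - 1)) := by
      rw [integral_sub (h_int ..) (h_int_sub ..), integral_comp_sub_right (fun t ↦ g (a, t)),
        zero_sub]
    _ = ∫ t in (0 : ℝ)..M, (g (1, t) - g (1, t - a)) :=
      integral_congr fun t _ ↦ sub_eq_sub_iff_add_eq_add.2 (hg a 1 t)
    _ = _ := by
      rw [integral_sub (h_int ..) (h_int_sub ..), integral_comp_sub_right (fun t ↦ g (1, t)),
        zero_sub]
  rw [sub_eq_iff_eq_add.1 h_change,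
    ← integral_interval_sub_left (h_int 1 0 (M - a)) (h_int 1 0 (-a)), emissionOffset]
  abel

theorem eq_emissionPotential_sub_add_emissionOffset [CompleteSpace E] (hg : IsPermutable g)
    (hcont : Continuous g) (a M : ℝ) :
    g (a, M) = emissionPotential g (M - a) - emissionPotential g M + emissionOffset g a := by
  rw [hg.eq_integral_sub_add_integral hcont, hg.integral_sub_one_eq hcont, emissionPotential,
    emissionPotential]
  abel

end IsPermutable

theorem tunneling_functional_equation_solution_general {n : ℕ∞} (Γ : ℝ × ℝ → ℝ)
    (hpos : ∀ p, 0 < Γ p) (hsmooth : ContDiff ℝ n Γ)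
    (hfe : ∀ ε₁ ε₂ M : ℝ,
      Γ (ε₁, M) * Γ (ε₂, M - ε₁) = Γ (ε₂, M) * Γ (ε₁, M - ε₂)) :
    ∃ f h : ℝ → ℝ, ContDiff ℝ n f ∧ ContDiff ℝ n h ∧
      ∀ ε M : ℝ, Γ (ε, M) = Real.exp (f (M - ε) - f M + h ε) := by
  have hne (p : ℝ × ℝ) : Γ p ≠ 0 := (hpos p).ne'
  have hlog : ContDiff ℝ n fun p ↦ Real.log (Γ p) := hsmooth.log hne
  refine ⟨_, _, contDiff_emissionPotential hlog, contDiff_emissionOffset hlog, fun ε M ↦ ?_⟩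
  rw [← (isPermutable_log hne hfe).eq_emissionPotential_sub_add_emissionOffset hlog.continuous,
    Real.exp_log (hpos _)]

/-- **Theorem 1 (necessity direction).**
If `Γ : ℝ × ℝ → (0, ∞)` is continuously differentiable and satisfies the
permutation functional equation
`Γ(ε₁, M) · Γ(ε₂, M − ε₁) = Γ(ε₂, M) · Γ(ε₁, M − ε₂)`,
then `Γ(ε, M) = exp (f (M − ε) − f M + h ε)` for some continuously
differentiable functions `f, h : ℝ → ℝ`. -/
theorem tunneling_functional_equation_solution
    (Γ : ℝ × ℝ → ℝ)
    (hpos : ∀ p, 0 < Γ p)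
    (hsmooth : ContDiff ℝ 1 Γ)
    (hfe : ∀ ε₁ ε₂ M : ℝ,
      Γ (ε₁, M) * Γ (ε₂, M - ε₁) = Γ (ε₂, M) * Γ (ε₁, M - ε₂)) :
    ∃ f h : ℝ → ℝ, ContDiff ℝ 1 f ∧ ContDiff ℝ 1 h ∧
      ∀ ε M : ℝ, Γ (ε, M) = Real.exp (f (M - ε) - f M + h ε) :=
  tunneling_functional_equation_solution_general (n := 1) Γ hpos hsmooth hfe
end

section
/- Let γ : ℝ × ℝ → ℝ be continuously differentiable and suppose γ(ε₁, M − ε₂) + γ(ε₂, M) = γ(ε₂, M − ε₁) + γ(ε₁, M) for all real ε₁, ε₂, M. Then for all real ε and M, the partial derivative of γ with respect to its second argument satisfies ∂γ/∂M (ε, M) = ∂γ/∂ε (0, M) − ∂γ/∂ε (0, M − ε), where ∂γ/∂ε denotes the partial derivative with respect to the first argument. -/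
/-! Differentiate the functional equation with respect to `ε₂` at `ε₂ = 0`: the term with `M - ε₂`
contributes `-∂γ/∂M (ε₁, M)`, and the two terms with first argument `ε₂` contribute
`∂γ/∂ε (0, M)` and `∂γ/∂ε (0, M - ε₁)`. Solved for `γ (ε₁, M - ε₂)`, the equation even forces
`γ (ε₁, ·)` to be differentiable at `M` once these last two derivatives exist. -/

section

open scoped Topology

variable {𝕜 E F G : Type*} [NontriviallyNormedField 𝕜]
  [NormedAddCommGroup E] [NormedSpace 𝕜 E] [NormedAddCommGroup F] [NormedSpace 𝕜 F]
  [NormedAddCommGroup G] [NormedSpace 𝕜 G]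

theorem hasFDerivAt_comp_const_sub {f : E → F} {f' : E →L[𝕜] F} {a x : E}
    (hf : HasFDerivAt f f' (a - x)) : HasFDerivAt (fun z => f (a - z)) (-f') x := by
  simpa [Function.comp_def] using hf.comp x ((hasFDerivAt_id x).const_sub a)

theorem hasFDerivAt_comp_prodMk_left {f : E × F → G} {f' : E × F →L[𝕜] G} {a : E} {b : F}
    (hf : HasFDerivAt f f' (a, b)) :
    HasFDerivAt (fun x => f (x, b)) (f' ∘L .inl 𝕜 E F) a :=
  hf.comp a (hasFDerivAt_prodMk_left a b)

theorem hasFDerivAt_comp_prodMk_right {f : E × F → G} {f' : E × F →L[𝕜] G} {a : E} {b : F}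
    (hf : HasFDerivAt f f' (a, b)) :
    HasFDerivAt (fun y => f (a, y)) (f' ∘L .inr 𝕜 E F) b :=
  hf.comp b (hasFDerivAt_prodMk_right a b)

theorem additive_fe_partial_derivative_relation_general {γ : E × E → F} {ε M : E}
    {A B : E →L[𝕜] F}
    (hfe : ∀ᶠ t in 𝓝 0, γ (ε, M - t) + γ (t, M) = γ (t, M - ε) + γ (ε, M))
    (hA : HasFDerivAt (fun t => γ (t, M)) A 0)
    (hB : HasFDerivAt (fun t => γ (t, M - ε)) B 0) :
    HasFDerivAt (fun N => γ (ε, N)) (A - B) M := by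
  have hsolved : (fun t => γ (ε, M - t)) =ᶠ[𝓝 0]
      fun t => γ (t, M - ε) + γ (ε, M) - γ (t, M) :=
    hfe.mono fun _ ht => eq_sub_of_add_eq ht
  have hreflected : HasFDerivAt (fun t => γ (ε, M - t)) (B - A) (M - M) := by
    rw [sub_self]
    exact ((hB.add_const _).sub hA).congr_of_eventuallyEq hsolved
  simpa using hasFDerivAt_comp_const_sub hreflected

end

/-- **Differentiation step in the proof of Theorem 1.**
If `γ : ℝ × ℝ → ℝ` is continuously differentiable and satisfies the additive
functional equation `γ(ε₁, M − ε₂) + γ(ε₂, M) = γ(ε₂, M − ε₁) + γ(ε₁, M)`,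
then `∂γ/∂M (ε, M) = ∂γ/∂ε (0, M) − ∂γ/∂ε (0, M − ε)`.
Here `∂γ/∂ε` is the derivative in the direction `(1, 0)` (first argument) and
`∂γ/∂M` the derivative in the direction `(0, 1)` (second argument). -/
theorem additive_fe_partial_derivative_relation
    (γ : ℝ × ℝ → ℝ)
    (hsmooth : ContDiff ℝ 1 γ)
    (hfe : ∀ ε₁ ε₂ M : ℝ,
      γ (ε₁, M - ε₂) + γ (ε₂, M) = γ (ε₂, M - ε₁) + γ (ε₁, M)) :
    ∀ ε M : ℝ,
      fderiv ℝ γ (ε, M) (0, 1)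
        = fderiv ℝ γ (0, M) (1, 0) - fderiv ℝ γ (0, M - ε) (1, 0) := by
  intro ε M
  have hγ (p : ℝ × ℝ) : HasFDerivAt γ (fderiv ℝ γ p) p :=
    (hsmooth.differentiable one_ne_zero p).hasFDerivAt
  have hpartial := additive_fe_partial_derivative_relation_general (.of_forall (hfe ε · M))
    (hasFDerivAt_comp_prodMk_left (hγ (0, M))) (hasFDerivAt_comp_prodMk_left (hγ (0, M - ε)))
  exact DFunLike.congr_fun ((hasFDerivAt_comp_prodMk_right (hγ (ε, M))).unique hpartial) 1
end

section
/- Let Γ : ℝ × ℝ → (0, ∞) be continuously differentiable and satisfy Γ(ε₁, M) · Γ(ε₂, M − ε₁) = Γ(ε₁ + ε₂, M) for all real ε₁, ε₂, M. Then there exists a function f : ℝ → ℝ such that Γ(ε, M) = exp(f(M − ε) − f(M)) for all real ε, M. -/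
/-!
The logarithm of `Γ` is a one-cocycle for the action of energies on masses by translation.
Translations act simply transitively, so such a cocycle is a coboundary: fix a reference mass and
let the potential `f` at `M` be the value of the cocycle on the unique translation taking the
reference mass to `M`.
-/

section TranslationCocycle

variable {V P : Type*} [AddGroup V] [AddTorsor V P]

theorem exists_potential_of_vadd_cocycle {A : Type*} [AddGroup A] {c : V → P → A}
    (hc : ∀ v w p, c v p + c w (v +ᵥ p) = c (w + v) p) :
    ∃ f : P → A, ∀ v p, c v p = -f p + f (v +ᵥ p) := by
  obtain ⟨p₀⟩ : Nonempty P := inferInstance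
  refine ⟨fun p ↦ c (p -ᵥ p₀) p₀, fun v p ↦ eq_neg_add_of_add_eq ?_⟩
  calc
    c (p -ᵥ p₀) p₀ + c v p
        = c (p -ᵥ p₀) p₀ + c v ((p -ᵥ p₀) +ᵥ p₀) := by rw [vsub_vadd]
    _ = c (v + (p -ᵥ p₀)) p₀ := hc _ _ _
    _ = c ((v +ᵥ p) -ᵥ p₀) p₀ := by rw [vadd_vsub_assoc]

theorem sequential_emission_solution_general {Γ : V × P → ℝ} (hpos : ∀ p, 0 < Γ p)
    (hseq : ∀ ε₁ ε₂ M, Γ (ε₁, M) * Γ (ε₂, -ε₁ +ᵥ M) = Γ (ε₁ + ε₂, M)) :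
    ∃ f : P → ℝ, ∀ ε M, Γ (ε, M) = Real.exp (f (-ε +ᵥ M) - f M) := by
  -- Emitting `ε` translates the mass by `-ε`, so the translation `v` is the emission of `-v`.
  have log_cocycle (v w : V) (M : P) :
      Real.log (Γ (-v, M)) + Real.log (Γ (-w, v +ᵥ M)) = Real.log (Γ (-(w + v), M)) := by
    rw [← Real.log_mul (hpos _).ne' (hpos _).ne', neg_add_rev, ← hseq, neg_neg]
  obtain ⟨f, hf⟩ := exists_potential_of_vadd_cocycle log_cocycle
  refine ⟨f, fun ε M ↦ ?_⟩
  have log_eq : Real.log (Γ (ε, M)) = f (-ε +ᵥ M) - f M := by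
    simpa only [neg_neg, neg_add_eq_sub] using hf (-ε) M
  rw [← log_eq, Real.exp_log (hpos _)]

end TranslationCocycle

/-- **General solution of the sequential-emission functional equation.**
If `Γ : ℝ × ℝ → (0, ∞)` is continuously differentiable and satisfies
`Γ(ε₁, M) · Γ(ε₂, M − ε₁) = Γ(ε₁ + ε₂, M)` for all `ε₁, ε₂, M`, then
`Γ(ε, M) = exp (f (M − ε) − f M)` for some function `f : ℝ → ℝ`. -/
theorem sequential_emission_solution
    (Γ : ℝ × ℝ → ℝ)
    (hpos : ∀ p, 0 < Γ p)
    (hsmooth : ContDiff ℝ 1 Γ)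
    (hseq : ∀ ε₁ ε₂ M : ℝ,
      Γ (ε₁, M) * Γ (ε₂, M - ε₁) = Γ (ε₁ + ε₂, M)) :
    ∃ f : ℝ → ℝ, ∀ ε M : ℝ, Γ (ε, M) = Real.exp (f (M - ε) - f M) := by
  simpa only [vadd_eq_add, neg_add_eq_sub] using
    sequential_emission_solution_general hpos (by simpa only [vadd_eq_add, neg_add_eq_sub])
end

section
/- Let n ≥ 1 and let γ : ℝⁿ × ℝⁿ → ℝ be continuously differentiable and satisfy γ(x, X) + γ(x′, X − x) = γ(x′, X) + γ(x, X − x′) for all x, x′, X ∈ ℝⁿ. Then for every index i ∈ {1, …, n} and all x, X ∈ ℝⁿ, ∂γ/∂Xᵢ (x, X) = ∂γ/∂xᵢ (0, X) − ∂γ/∂xᵢ (0, X − x), where ∂γ/∂xᵢ denotes the partial derivative in the i-th coordinate of the first (vector) argument and ∂γ/∂Xᵢ the partial derivative in the i-th coordinate of the second (vector) argument. -/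
/-!
In the functional equation the variable `x'` enters the second argument only through
`γ (x, X - x')`; everywhere else it is the first argument. Differentiating in `x'` at `x' = 0`
therefore expresses a derivative in the second argument at `(x, X)` by derivatives in the first
argument at `(0, X)` and `(0, X - x)`.
-/

/-- The additive form `γ = ln Γ` of the permutation functional equation
`Γ(x, X) Γ(x', X - x) = Γ(x', X) Γ(x, X - x')`. -/
def AdditivePermutationEq {G M : Type*} [Sub G] [Add M] (γ : G × G → M) : Prop :=
  ∀ x x' X : G, γ (x, X) + γ (x', X - x) = γ (x', X) + γ (x, X - x')

theorem AdditivePermutationEq.apply_sub_right {G M : Type*} [Sub G] [AddCommGroup M]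
    {γ : G × G → M} (hγ : AdditivePermutationEq γ) (x x' X : G) :
    γ (x, X - x') = γ (x, X) - (γ (x', X) - γ (x', X - x)) := by
  rw [sub_sub_eq_add_sub, hγ x x' X, add_sub_cancel_left]

theorem multivariate_additive_fe_partial_derivative_relation_general
    {𝕜 E F : Type*} [NontriviallyNormedField 𝕜] [AddCommGroup E] [Module 𝕜 E]
    [NormedAddCommGroup F] [NormedSpace 𝕜 F] {γ : E × E → F} (hγ : AdditivePermutationEq γ)
    {x X v : E} {a b : F} (ha : HasLineDerivAt 𝕜 γ a (0, X) (v, 0))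
    (hb : HasLineDerivAt 𝕜 γ b (0, X - x) (v, 0)) :
    HasLineDerivAt 𝕜 γ (a - b) (x, X) (0, v) := by
  have along_line (t : 𝕜) : γ ((x, X) + t • (0, -v)) =
      γ (x, X) - (γ ((0, X) + t • (v, 0)) - γ ((0, X - x) + t • (v, 0))) := by
    simpa [sub_eq_add_neg] using hγ.apply_sub_right x (t • v) X
  have deriv_neg : HasLineDerivAt 𝕜 γ (-(a - b)) (x, X) (0, -v) :=
    ((ha.sub hb).const_sub (γ (x, X))).congr_of_eventuallyEq (.of_forall along_line)
  simpa using deriv_neg.smul (-1)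

/-- **Differentiation step in the proof of Theorem 3.**
If `γ : ℝⁿ × ℝⁿ → ℝ` is continuously differentiable and satisfies the additive
functional equation `γ(x, X) + γ(x′, X − x) = γ(x′, X) + γ(x, X − x′)`, then
for every coordinate `i`,
`∂γ/∂Xᵢ (x, X) = ∂γ/∂xᵢ (0, X) − ∂γ/∂xᵢ (0, X − x)`.
Partial derivatives are expressed as directional derivatives along the
coordinate directions `(0, Pi.single i 1)` (second argument) and
`(Pi.single i 1, 0)` (first argument). -/
theorem multivariate_additive_fe_partial_derivative_relation
    (n : ℕ) (hn : 1 ≤ n)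
    (γ : (Fin n → ℝ) × (Fin n → ℝ) → ℝ)
    (hsmooth : ContDiff ℝ 1 γ)
    (hfe : ∀ x x' X : Fin n → ℝ,
      γ (x, X) + γ (x', X - x) = γ (x', X) + γ (x, X - x')) :
    ∀ (i : Fin n) (x X : Fin n → ℝ),
      fderiv ℝ γ (x, X) (0, Pi.single i 1)
        = fderiv ℝ γ (0, X) (Pi.single i 1, 0)
          - fderiv ℝ γ (0, X - x) (Pi.single i 1, 0) := by
  have hline (p v) : HasLineDerivAt ℝ γ (fderiv ℝ γ p v) p v :=
    (hsmooth.differentiable one_ne_zero p).hasFDerivAt.hasLineDerivAt v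
  exact fun i x X ↦ (hline _ _).unique <|
    multivariate_additive_fe_partial_derivative_relation_general hfe (hline _ _) (hline _ _)
end

section
/- Let n ≥ 2 and let h : ℝⁿ × ℝⁿ⁻¹ → ℝ be twice continuously differentiable, where the first argument is written x = (x₁, …, xₙ) with truncation x̂ = (x₁, …, xₙ₋₁) and the second argument is X̂ = (X₁, …, Xₙ₋₁). Suppose that for each i ∈ {1, …, n−1} and all (x, X̂), ∂h/∂Xᵢ (x, X̂) = ∂h/∂xᵢ (0, X̂) − ∂h/∂xᵢ (0, X̂ − x̂). Then there exist functions u : ℝⁿ → ℝ and w : ℝⁿ⁻¹ × ℝⁿ⁻¹ → ℝ such that h(x, X̂) = u(x) + w(x̂, X̂) for all x ∈ ℝⁿ and X̂ ∈ ℝⁿ⁻¹. -/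
/-!
The right-hand side of the differential equation depends on `x` only through `x̂`. Hence, if
`x̂ = ŷ`, the slices `h (x, ·)` and `h (y, ·)` have the same gradient and so differ by a constant.
In other words `h (x, X̂) - h (x, 0)` depends only on `(x̂, X̂)`: it is the function `w`, and
`u x = h (x, 0)`.
-/

theorem exists_eq_add_of_sub_factorsThrough {A B S H : Type*} [AddCommGroup H]
    {h : A × B → H} {τ : A → S} {b₀ : B}
    (hτ : (fun a b ↦ h (a, b) - h (a, b₀)).FactorsThrough τ) :
    ∃ (u : A → H) (w : S × B → H), ∀ a b, h (a, b) = u a + w (τ a, b) := by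
  obtain ⟨w, hw⟩ := (Function.factorsThrough_iff _).mp hτ
  refine ⟨fun a ↦ h (a, b₀), fun p ↦ w p.1 p.2, fun a b ↦ ?_⟩
  exact eq_add_of_sub_eq' (congrFun₂ hw a b)

theorem span_range_piSingle_one (R ι : Type*) [Semiring R] [Finite ι] [DecidableEq ι] :
    Submodule.span R (Set.range fun i : ι ↦ (Pi.single i 1 : ι → R)) = ⊤ := by
  simpa only [funext (Pi.basisFun_apply R ι)] using (Pi.basisFun R ι).span_eq

section Calculus

variable {𝕜 F G : Type*} [NontriviallyNormedField 𝕜] [NormedAddCommGroup F] [NormedSpace 𝕜 F]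
  [NormedAddCommGroup G] [NormedSpace 𝕜 G]

theorem fderiv_comp_prodMk_right_apply {E : Type*} [NormedAddCommGroup E] [NormedSpace 𝕜 E]
    {f : E × F → G} {x : E} {y : F} (hf : DifferentiableAt 𝕜 f (x, y)) (v : F) :
    fderiv 𝕜 (fun z ↦ f (x, z)) y v = fderiv 𝕜 f (x, y) (0, v) := by
  have hslice := hf.hasFDerivAt.comp y (hasFDerivAt_prodMk_right x y)
  exact DFunLike.congr_fun hslice.fderiv v

variable [IsRCLikeNormedField 𝕜]

theorem sub_eq_sub_of_fderiv_eq {f g : F → G} (hf : Differentiable 𝕜 f) (hg : Differentiable 𝕜 g)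
    (hfg : ∀ x, fderiv 𝕜 f x = fderiv 𝕜 g x) (x y : F) : f x - f y = g x - g y := by
  have hconst : (f - g) x = (f - g) y :=
    is_const_of_fderiv_eq_zero (hf.sub hg)
      (fun z ↦ by rw [fderiv_sub (hf z) (hg z), hfg, sub_self]) x y
  exact sub_eq_sub_iff_sub_eq_sub.mp hconst

theorem dimensional_reduction_split_general {A S ι : Type*} {h : A × F → G} {τ : A → S} {e : ι → F}
    (he : Dense (Submodule.span 𝕜 (Set.range e) : Set F))
    (hdiff : ∀ x, Differentiable 𝕜 fun X ↦ h (x, X))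
    (hτ : ∀ i X, (fun x ↦ fderiv 𝕜 (fun Y ↦ h (x, Y)) X (e i)).FactorsThrough τ) :
    ∃ (u : A → G) (w : S × F → G), ∀ x X, h (x, X) = u x + w (τ x, X) := by
  refine exists_eq_add_of_sub_factorsThrough (b₀ := 0) fun x y hxy ↦ funext fun X ↦ ?_
  have hgrad (Y : F) : fderiv 𝕜 (fun Z ↦ h (x, Z)) Y = fderiv 𝕜 (fun Z ↦ h (y, Z)) Y :=
    ContinuousLinearMap.ext_on he (Set.forall_mem_range.mpr fun i ↦ hτ i Y hxy)
  exact sub_eq_sub_of_fderiv_eq (hdiff x) (hdiff y) hgrad X 0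

end Calculus

/-- **Dimensional-reduction step in the proof of Theorem 3.**
Let `n ≥ 2` and let `h : ℝⁿ × ℝⁿ⁻¹ → ℝ` be twice continuously differentiable,
where for `x = (x₁, …, xₙ) ∈ ℝⁿ` we write `x̂ = (x₁, …, xₙ₋₁) ∈ ℝⁿ⁻¹` for its
truncation.  Suppose that for each `i ∈ {1, …, n−1}` and all `(x, X̂)`,
`∂h/∂Xᵢ (x, X̂) = ∂h/∂xᵢ (0, X̂) − ∂h/∂xᵢ (0, X̂ − x̂)`.
Then `h (x, X̂) = u x + w (x̂, X̂)` for some `u : ℝⁿ → ℝ` and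
`w : ℝⁿ⁻¹ × ℝⁿ⁻¹ → ℝ`. -/
theorem dimensional_reduction_split
    (n : ℕ) (hn : 2 ≤ n)
    (h : (Fin n → ℝ) × (Fin (n - 1) → ℝ) → ℝ)
    (hsmooth : ContDiff ℝ 2 h)
    (trunc : (Fin n → ℝ) → (Fin (n - 1) → ℝ))
    (htrunc : ∀ (x : Fin n → ℝ) (i : Fin (n - 1)),
      trunc x i = x (Fin.castLE (Nat.sub_le n 1) i))
    (hpde : ∀ (i : Fin (n - 1)) (x : Fin n → ℝ) (X : Fin (n - 1) → ℝ),
      fderiv ℝ h (x, X) (0, Pi.single i 1)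
        = fderiv ℝ h (0, X) (Pi.single (Fin.castLE (Nat.sub_le n 1) i) 1, 0)
          - fderiv ℝ h (0, X - trunc x)
              (Pi.single (Fin.castLE (Nat.sub_le n 1) i) 1, 0)) :
    ∃ (u : (Fin n → ℝ) → ℝ) (w : (Fin (n - 1) → ℝ) × (Fin (n - 1) → ℝ) → ℝ),
      ∀ (x : Fin n → ℝ) (X : Fin (n - 1) → ℝ),
        h (x, X) = u x + w (trunc x, X) := by
  have hdiff : Differentiable ℝ h := hsmooth.differentiable two_ne_zero
  refine dimensional_reduction_split_general (𝕜 := ℝ) (e := fun i ↦ Pi.single i 1)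
    (by simp only [span_range_piSingle_one, Submodule.top_coe, dense_univ])
    (fun x ↦ by fun_prop) fun i X x y hxy ↦ ?_
  simp only [fderiv_comp_prodMk_right_apply (hdiff _), hpde, hxy]
end
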